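/- Every quaternion matrix Q ∈ ℍ^{m×n} admits a singular value decomposition: there exist unitary quaternion matrices U ∈ ℍ^{m×m} and V ∈ ℍ^{n×n} and real numbers σ₁ ≥ σ₂ ≥ ⋯ ≥ σ_ℓ ≥ 0 with ℓ = min(m,n) such that Q = U Σ V^H, where Σ ∈ ℝ^{m×n} is the rectangular diagonal matrix with diagonal entries σ₁,…,σ_ℓ. -/

import Mathlib

open Quaternion Matrix

/-! Choose unitary `U` and `V` so that `A = Uᴴ * Q * V` maximizes the real Frobenius inner product
`re tr (Dᴴ * A)` with a fixed rectangular diagonal matrix `D` whose weights are positive and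
strictly decreasing. Differentiating along `t ↦ exp (t • K)` with `K` skew-adjoint shows that
`Dᴴ * A` and `D * Aᴴ` are Hermitian. Hence `D * Dᴴ * A = D * Aᴴ * D = A * (Dᴴ * D)`, and the
distinct weights force `A` to be diagonal, with real entries because `Dᴴ * A` is Hermitian.
Comparing with sign changes and with transpositions of the diagonal entries shows that these are
nonnegative and decreasing. -/

section MaximumOnUnitary

theorem map_eq_zero_of_isMaxOn_unitary {𝔸 : Type*} [NormedRing 𝔸] [NormedAlgebra ℝ 𝔸]
    [CompleteSpace 𝔸] [StarRing 𝔸] [ContinuousStar 𝔸] [StarModule ℝ 𝔸] (f : 𝔸 →L[ℝ] ℝ)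
    (hf : IsMaxOn f (unitary 𝔸) 1) {x : 𝔸} (hx : x ∈ skewAdjoint 𝔸) : f x = 0 := by
  have hmax : IsLocalMax (fun t : ℝ => f (NormedSpace.exp (t • x))) 0 := by
    refine Filter.Eventually.of_forall fun t => ?_
    let _ : NormedAlgebra ℚ 𝔸 := NormedAlgebra.restrictScalars ℚ ℝ 𝔸
    simpa using hf (NormedSpace.exp_mem_unitary_of_mem_skewAdjoint (skewAdjoint.smul_mem t hx))
  have hderiv : HasDerivAt (fun t : ℝ => f (NormedSpace.exp (t • x))) (f x) 0 := by
    simpa [Function.comp_def] using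
      f.hasFDerivAt.comp_hasDerivAt (0 : ℝ) (hasDerivAt_exp_smul_const x (0 : ℝ))
  exact hmax.hasDerivAt_eq_zero hderiv

theorem map_nonneg_of_isMaxOn_unitary {A M : Type*} [Ring A] [StarRing A] [AddCommGroup M]
    [LinearOrder M] [IsOrderedAddMonoid M] (f : A →+ M) (hf : IsMaxOn f (unitary A) 1) {p : A}
    (hp : IsStarProjection p) : 0 ≤ f p := by
  have hreflection : 1 - 2 • p ∈ unitary A := by
    convert hp.one_sub.two_mul_sub_one_mem_unitary using 1
    noncomm_ring
  have hle : f 1 - 2 • f p ≤ f 1 := by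
    rw [← map_nsmul, ← map_sub]
    exact hf hreflection
  exact (nsmul_nonneg_iff two_ne_zero).mp ((sub_le_self_iff _).mp hle)

end MaximumOnUnitary

theorem monovary_of_forall_sum_mul_comp_perm_le {ι R : Type*} [Fintype ι] [CommRing R]
    [LinearOrder R] [IsStrictOrderedRing R] {w a : ι → R}
    (h : ∀ e : Equiv.Perm ι, ∑ k, w k * a (e k) ≤ ∑ k, w k * a k) : Monovary a w := by
  classical
  intro i j hij
  have hswap : ∑ k, (w k * a k - w k * a (Equiv.swap i j k)) = (w j - w i) * (a j - a i) := by
    rw [Finset.sum_eq_add i j (ne_of_apply_ne w hij.ne)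
      (fun k _ hk => by rw [Equiv.swap_apply_of_ne_of_ne hk.1 hk.2, sub_self]) (by simp) (by simp),
      Equiv.swap_apply_left, Equiv.swap_apply_right]
    ring
  have hnonneg : 0 ≤ (w j - w i) * (a j - a i) := by
    rw [← hswap, Finset.sum_sub_distrib]
    exact sub_nonneg.mpr (h _)
  exact sub_nonneg.mp (nonneg_of_mul_nonneg_right hnonneg (sub_pos.mpr hij))

theorem permMatrix_mem_unitary {ι R : Type*} [Fintype ι] [DecidableEq ι] [Semiring R] [StarRing R]
    (e : Equiv.Perm ι) : e.permMatrix R ∈ unitary (Matrix ι ι R) := by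
  simp [Unitary.mem_iff, star_eq_conjTranspose, ← permMatrix_mul]

section RealTrace

variable {ι κ R : Type*} [Fintype ι] [Fintype κ] [CommRing R]

/-- The real part of the trace of a square quaternion matrix. Unlike the trace itself, it is cyclic;
`reTrace (Bᴴ * A)` is the real Frobenius inner product of `A` and `B`. -/
def reTrace : Matrix ι ι ℍ[R] →ₗ[R] R :=
  (QuaternionAlgebra.reₗ (-1) 0 (-1)) ∘ₗ traceLinearMap ι R ℍ[R]

theorem reTrace_apply (M : Matrix ι ι ℍ[R]) : reTrace M = ∑ i, (M i i).re :=
  map_sum (QuaternionAlgebra.reₗ (-1) 0 (-1)) _ _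

theorem reTrace_mul (M : Matrix ι κ ℍ[R]) (N : Matrix κ ι ℍ[R]) :
    reTrace (M * N) = ∑ i, ∑ j, (M i j * N j i).re := by
  rw [reTrace_apply]
  exact Finset.sum_congr rfl fun i _ => map_sum (QuaternionAlgebra.reₗ (-1) 0 (-1)) _ _

theorem reTrace_mul_comm (M : Matrix ι κ ℍ[R]) (N : Matrix κ ι ℍ[R]) :
    reTrace (M * N) = reTrace (N * M) := by
  rw [reTrace_mul, reTrace_mul, Finset.sum_comm]
  refine Finset.sum_congr rfl fun i _ => Finset.sum_congr rfl fun j _ => ?_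
  simp only [re_mul]
  ring

theorem reTrace_conjTranspose (M : Matrix ι ι ℍ[R]) : reTrace Mᴴ = reTrace M := by
  simp only [reTrace_apply, conjTranspose_apply, re_star]

theorem reTrace_conjTranspose_mul_self (M : Matrix ι κ ℍ[R]) :
    reTrace (Mᴴ * M) = ∑ j, ∑ i, normSq (M i j) := by
  simp only [reTrace_mul, conjTranspose_apply, star_mul_self, re_coe]

section Ordered

variable [LinearOrder R] [IsStrictOrderedRing R]

theorem normSq_apply_le_reTrace_conjTranspose_mul_self (M : Matrix ι κ ℍ[R]) (i : ι) (j : κ) :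
    normSq (M i j) ≤ reTrace (Mᴴ * M) := by
  rw [reTrace_conjTranspose_mul_self]
  calc normSq (M i j) ≤ ∑ i, normSq (M i j) :=
        Finset.single_le_sum (f := fun i => normSq (M i j)) (fun _ _ => normSq_nonneg)
          (Finset.mem_univ i)
    _ ≤ ∑ j, ∑ i, normSq (M i j) :=
        Finset.single_le_sum (f := fun j => ∑ i, normSq (M i j))
          (fun _ _ => Finset.sum_nonneg fun _ _ => normSq_nonneg) (Finset.mem_univ j)

theorem eq_zero_of_reTrace_conjTranspose_mul_self_eq_zero {M : Matrix ι κ ℍ[R]}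
    (hM : reTrace (Mᴴ * M) = 0) : M = 0 := by
  ext1 i j
  have hle := normSq_apply_le_reTrace_conjTranspose_mul_self M i j
  exact normSq_eq_zero.mp (le_antisymm (hM ▸ hle) normSq_nonneg)

end Ordered

end RealTrace

theorem isCompact_unitary_matrix_quaternion {ι : Type*} [Fintype ι] [DecidableEq ι] :
    IsCompact (unitary (Matrix ι ι ℍ) : Set (Matrix ι ι ℍ)) := by
  have hcompact : IsCompact (Set.univ.pi fun _ : ι => Set.univ.pi fun _ : ι =>
      Metric.closedBall (0 : ℍ) √(reTrace (1 : Matrix ι ι ℍ))) :=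
    isCompact_univ_pi fun _ => isCompact_univ_pi fun _ => isCompact_closedBall _ _
  refine hcompact.of_isClosed_subset (isClosed_unitary (R := Matrix ι ι ℍ))
    fun (U : Matrix ι ι ℍ) hU i _ j _ => ?_
  have hentry : ‖U i j‖ ^ 2 ≤ reTrace (1 : Matrix ι ι ℍ) := by
    rw [sq, ← normSq_eq_norm_mul_self, ← show Uᴴ * U = 1 from hU.1]
    exact normSq_apply_le_reTrace_conjTranspose_mul_self U i j
  exact mem_closedBall_zero_iff.mpr (Real.le_sqrt_of_sq_le hentry)

section MaximalRealTrace

variable {ι : Type*} [Fintype ι] [DecidableEq ι] {M : Matrix ι ι ℍ}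

section

attribute [local instance] Matrix.linftyOpNormedRing Matrix.linftyOpNormedAlgebra

theorem reTrace_mul_eq_zero_of_isMaxOn {K : Matrix ι ι ℍ}
    (hM : IsMaxOn (fun G => reTrace (M * G)) (unitary (Matrix ι ι ℍ)) 1) (hK : Kᴴ = -K) :
    reTrace (M * K) = 0 :=
  -- The topology of this norm is the usual one, but not reducibly, which hides the global instance.
  have : @ContinuousStar (Matrix ι ι ℍ) PseudoMetricSpace.toUniformSpace.toTopologicalSpace _ :=
    ⟨continuous_id.matrix_conjTranspose⟩
  have : StarModule ℝ ℍ := ⟨Quaternion.star_smul⟩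
  map_eq_zero_of_isMaxOn_unitary
    (LinearMap.toContinuousLinearMap (reTrace ∘ₗ LinearMap.mulLeft ℝ M)) hM hK

end

theorem isHermitian_of_isMaxOn_reTrace_mul
    (hM : IsMaxOn (fun G => reTrace (M * G)) (unitary (Matrix ι ι ℍ)) 1) : M.IsHermitian := by
  have hskew : (Mᴴ - M)ᴴ = -(Mᴴ - M) := by simp
  have hM0 : reTrace (M * (Mᴴ - M)) = 0 := reTrace_mul_eq_zero_of_isMaxOn hM hskew
  have hMH0 : reTrace (Mᴴ * (Mᴴ - M)) = 0 := by
    rw [← reTrace_conjTranspose, conjTranspose_mul, hskew, conjTranspose_conjTranspose,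
      Matrix.neg_mul, map_neg, reTrace_mul_comm, hM0, neg_zero]
  refine sub_eq_zero.mp (eq_zero_of_reTrace_conjTranspose_mul_self_eq_zero ?_)
  rw [hskew, Matrix.neg_mul, Matrix.sub_mul, map_neg, map_sub, hM0, hMH0, sub_zero, neg_zero]

theorem re_apply_self_nonneg_of_isMaxOn_reTrace_mul
    (hM : IsMaxOn (fun G => reTrace (M * G)) (unitary (Matrix ι ι ℍ)) 1) (i : ι) :
    0 ≤ (M i i).re := by
  have hproj : IsStarProjection (single i i 1 : Matrix ι ι ℍ) :=
    ⟨by simp [IsIdempotentElem], by simp [IsSelfAdjoint, star_eq_conjTranspose]⟩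
  have h : 0 ≤ reTrace (M * single i i 1) :=
    map_nonneg_of_isMaxOn_unitary (reTrace ∘ₗ LinearMap.mulLeft ℝ M).toAddMonoidHom hM hproj
  have hentry : reTrace (M * single i i 1) = (M i i).re := by
    rw [reTrace_mul_comm]
    exact congrArg QuaternionAlgebra.re ((trace_single_mul i i 1 M).trans (one_smul _ _))
  exact hentry ▸ h

end MaximalRealTrace

section Aligned

variable {ι κ : Type*} [Fintype ι] [Fintype κ] [DecidableEq ι] [DecidableEq κ]

/-- `A` is aligned with `D` if, among the matrices unitarily equivalent to `A`, it has the largest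
real Frobenius inner product with `D`; equivalently, it is closest to `D` in the Frobenius norm. -/
def IsAligned (D A : Matrix ι κ ℍ) : Prop :=
  ∀ G ∈ unitary (Matrix ι ι ℍ), ∀ H ∈ unitary (Matrix κ κ ℍ),
    reTrace (Dᴴ * (Gᴴ * A * H)) ≤ reTrace (Dᴴ * A)

theorem exists_isAligned (D Q : Matrix ι κ ℍ) :
    ∃ U ∈ unitary (Matrix ι ι ℍ), ∃ V ∈ unitary (Matrix κ κ ℍ), IsAligned D (Uᴴ * Q * V) := by
  have hcont : Continuous fun p : Matrix ι ι ℍ × Matrix κ κ ℍ =>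
      reTrace (Dᴴ * (p.1ᴴ * Q * p.2)) :=
    have : Continuous fun p : Matrix ι ι ℍ × Matrix κ κ ℍ => Dᴴ * (p.1ᴴ * Q * p.2) := by fun_prop
    (reTrace (ι := κ) (R := ℝ)).continuous_of_finiteDimensional.comp this
  obtain ⟨⟨U, V⟩, ⟨hU, hV⟩, hmax⟩ :=
    (isCompact_unitary_matrix_quaternion.prod isCompact_unitary_matrix_quaternion).exists_isMaxOn
      ⟨(1, 1), one_mem _, one_mem _⟩ hcont.continuousOn
  refine ⟨U, hU, V, hV, fun G hG H hH => ?_⟩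
  simpa only [Set.mem_ofPred_eq, conjTranspose_mul, Matrix.mul_assoc] using
    hmax (Set.mk_mem_prod (mul_mem hU hG) (mul_mem hV hH))

namespace IsAligned

variable {D A : Matrix ι κ ℍ}

theorem conjTranspose (h : IsAligned D A) : IsAligned Dᴴ Aᴴ := by
  intro G hG H hH
  calc reTrace (Dᴴᴴ * (Gᴴ * Aᴴ * H))
      = reTrace ((Hᴴ * A * G) * Dᴴ) := by
        rw [← reTrace_conjTranspose]
        simp only [conjTranspose_mul, conjTranspose_conjTranspose, Matrix.mul_assoc]
    _ = reTrace (Dᴴ * (Hᴴ * A * G)) := reTrace_mul_comm _ _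
    _ ≤ reTrace (Dᴴ * A) := h H hH G hG
    _ = reTrace (A * Dᴴ) := reTrace_mul_comm _ _
    _ = reTrace (Dᴴᴴ * Aᴴ) := by rw [← reTrace_conjTranspose, conjTranspose_mul]

theorem isMaxOn_reTrace_mul (h : IsAligned D A) :
    IsMaxOn (fun G => reTrace (Dᴴ * A * G)) (unitary (Matrix κ κ ℍ)) 1 := fun G hG => by
  simpa [Matrix.mul_assoc] using h 1 (one_mem _) G hG

theorem isHermitian_conjTranspose_mul (h : IsAligned D A) : (Dᴴ * A).IsHermitian :=
  isHermitian_of_isMaxOn_reTrace_mul h.isMaxOn_reTrace_mul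

theorem mul_conjTranspose_mul_eq (h : IsAligned D A) : D * Dᴴ * A = A * (Dᴴ * D) := by
  have hleft : Aᴴ * D = Dᴴ * A := by simpa [IsHermitian] using h.isHermitian_conjTranspose_mul
  have hright : A * Dᴴ = D * Aᴴ := by
    simpa [IsHermitian] using h.conjTranspose.isHermitian_conjTranspose_mul
  rw [Matrix.mul_assoc, ← hleft, ← Matrix.mul_assoc, ← hright, Matrix.mul_assoc]

theorem reTrace_submatrix_le (h : IsAligned D A) (e : Equiv.Perm ι) (f : Equiv.Perm κ) :
    reTrace (Dᴴ * A.submatrix e f) ≤ reTrace (Dᴴ * A) := by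
  have := h _ (permMatrix_mem_unitary e⁻¹) _ (permMatrix_mem_unitary f⁻¹)
  rwa [conjTranspose_permMatrix, inv_inv, Equiv.Perm.permMatrix, PEquiv.toMatrix_toPEquiv_mul,
    Equiv.Perm.permMatrix, PEquiv.mul_toMatrix_toPEquiv, submatrix_submatrix] at this

end IsAligned

end Aligned

section RectDiagonal

variable {α : Type*} {m n : ℕ}

/-- The `m × n` matrix with diagonal entries `d` and zeros elsewhere, the rectangular analogue of
`Matrix.diagonal`. -/
def rectDiagonal [Zero α] (d : Fin (min m n) → α) : Matrix (Fin m) (Fin n) α :=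
  of fun i j => if h : (i : ℕ) = (j : ℕ) then
    d ⟨(i : ℕ), lt_min_iff.mpr ⟨i.isLt, h ▸ j.isLt⟩⟩ else 0

/-- The diagonal entries of a rectangular matrix, the rectangular analogue of `Matrix.diag`. -/
def rectDiag (A : Matrix (Fin m) (Fin n) α) (k : Fin (min m n)) : α :=
  A (k.castLE (min_le_left m n)) (k.castLE (min_le_right m n))

theorem eq_rectDiagonal_rectDiag [Zero α] {A : Matrix (Fin m) (Fin n) α}
    (hA : ∀ (i : Fin m) (j : Fin n), (i : ℕ) ≠ j → A i j = 0) : A = rectDiagonal (rectDiag A) := by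
  ext i j
  by_cases h : (i : ℕ) = j
  · simp only [rectDiagonal, of_apply, dif_pos h, rectDiag]
    exact congrArg (A i) (Fin.ext h.symm)
  · simp only [rectDiagonal, of_apply, dif_neg h, hA i j h]

theorem conjTranspose_rectDiagonal [AddMonoid α] [StarAddMonoid α] (d : Fin (min m n) → α) :
    (rectDiagonal d)ᴴ = rectDiagonal fun k => star (d (k.cast (min_comm n m))) := by
  ext i j
  by_cases h : (j : ℕ) = i
  · simp [rectDiagonal, h]
  · simp [rectDiagonal, h, Ne.symm h]

theorem rectDiagonal_mul_apply [NonUnitalNonAssocSemiring α] {κ : Type*} (d : Fin (min m n) → α)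
    (B : Matrix (Fin n) κ α) (i : Fin m) (c : κ) :
    (rectDiagonal d * B) i c =
      if h : (i : ℕ) < n then d ⟨i, lt_min i.isLt h⟩ * B ⟨i, h⟩ c else 0 := by
  rw [mul_apply]
  split_ifs with h
  · rw [Fintype.sum_eq_single ⟨i, h⟩ fun j hj => by
      simp [rectDiagonal, show (i : ℕ) ≠ j from fun hij => hj (Fin.ext hij.symm)]]
    simp [rectDiagonal]
  · exact Finset.sum_eq_zero fun j _ => by
      simp [rectDiagonal, show (i : ℕ) ≠ j from fun hij => h (hij ▸ j.isLt)]

theorem rectDiagonal_mul_conjTranspose [NonUnitalNonAssocSemiring α] [StarRing α]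
    (d : Fin (min m n) → α) :
    rectDiagonal d * (rectDiagonal d)ᴴ = diagonal fun i : Fin m =>
      if h : (i : ℕ) < n then d ⟨i, lt_min i.isLt h⟩ * star (d ⟨i, lt_min i.isLt h⟩) else 0 := by
  ext i j
  rw [rectDiagonal_mul_apply]
  by_cases hij : i = j
  · subst hij
    simp [rectDiagonal]
  · simp [rectDiagonal, hij, Fin.val_ne_of_ne (Ne.symm hij)]

theorem conjTranspose_rectDiagonal_mul_self [NonUnitalNonAssocSemiring α] [StarRing α]
    (d : Fin (min m n) → α) :
    (rectDiagonal d)ᴴ * rectDiagonal d = diagonal fun j : Fin n =>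
      if h : (j : ℕ) < m then star (d ⟨j, lt_min h j.isLt⟩) * d ⟨j, lt_min h j.isLt⟩ else 0 := by
  have h := rectDiagonal_mul_conjTranspose fun k : Fin (min n m) => star (d (k.cast (min_comm n m)))
  rw [← conjTranspose_rectDiagonal, conjTranspose_conjTranspose] at h
  simpa only [star_star, Fin.cast_mk] using h

theorem conjTranspose_rectDiagonal_mul_apply [NonUnitalNonAssocSemiring α] [StarRing α] {κ : Type*}
    (d : Fin (min m n) → α) (A : Matrix (Fin m) κ α) (k : Fin (min m n)) (c : κ) :
    ((rectDiagonal d)ᴴ * A) (k.castLE (min_le_right m n)) c =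
      star (d k) * A (k.castLE (min_le_left m n)) c := by
  rw [conjTranspose_rectDiagonal, rectDiagonal_mul_apply]
  exact dif_pos (lt_min_iff.mp k.isLt).1

theorem rectDiag_submatrix_viaEmbedding (A : Matrix (Fin m) (Fin n) α)
    (e : Equiv.Perm (Fin (min m n))) :
    rectDiag (A.submatrix (e.viaEmbedding (Fin.castLEEmb (min_le_left m n)))
      (e.viaEmbedding (Fin.castLEEmb (min_le_right m n)))) = rectDiag A ∘ e := by
  ext k
  exact congrArg₂ A (e.viaEmbedding_apply (Fin.castLEEmb (min_le_left m n)) k)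
    (e.viaEmbedding_apply (Fin.castLEEmb (min_le_right m n)) k)

theorem reTrace_conjTranspose_rectDiagonal_mul {R : Type*} [CommRing R] (d : Fin (min m n) → ℍ[R])
    (A : Matrix (Fin m) (Fin n) ℍ[R]) :
    reTrace ((rectDiagonal d)ᴴ * A) = ∑ k, (star (d k) * rectDiag A k).re := by
  rw [reTrace_apply]
  refine (Finset.sum_of_injOn (Fin.castLE (min_le_right m n)) (Fin.castLE_injective _).injOn
    (by simp) (fun j _ hj => ?_) fun k _ => ?_).symm
  · have hjm : ¬ (j : ℕ) < m := fun h => hj ⟨⟨j, lt_min h j.isLt⟩, by simp, rfl⟩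
    rw [conjTranspose_rectDiagonal, rectDiagonal_mul_apply, dif_neg hjm, re_zero]
  · rw [conjTranspose_rectDiagonal_mul_apply, rectDiag]

end RectDiagonal

theorem eq_zero_of_coe_mul_eq_mul_coe {R : Type*} [CommRing R] [IsDomain R] {x y : R} {q : ℍ[R]}
    (hxy : x ≠ y) (h : (x : ℍ[R]) * q = q * y) : q = 0 := by
  rw [coe_mul_eq_smul, mul_coe_eq_smul, ← sub_eq_zero, ← sub_smul] at h
  exact (smul_eq_zero.mp h).resolve_left (sub_ne_zero.mpr hxy)

namespace IsAligned

variable {m n : ℕ} {A : Matrix (Fin m) (Fin n) ℍ} {w : Fin (min m n) → ℝ}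

theorem apply_eq_zero (h : IsAligned (rectDiagonal fun k => (w k : ℍ)) A) (hpos : ∀ k, 0 < w k)
    (hw : Function.Injective w) {i : Fin m} {j : Fin n} (hij : (i : ℕ) ≠ j) : A i j = 0 := by
  have hcomm := congrFun₂ h.mul_conjTranspose_mul_eq i j
  rw [rectDiagonal_mul_conjTranspose, conjTranspose_rectDiagonal_mul_self, diagonal_mul,
    mul_diagonal] at hcomm
  simp only [star_coe, ← coe_mul] at hcomm
  split_ifs at hcomm with hi hj hj
  · refine eq_zero_of_coe_mul_eq_mul_coe (fun hsq => hij ?_) hcomm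
    exact Fin.mk.inj (hw ((mul_self_inj (hpos _).le (hpos _).le).mp hsq))
  · exact eq_zero_of_coe_mul_eq_mul_coe (mul_self_ne_zero.mpr (hpos _).ne') (by simpa using hcomm)
  · exact eq_zero_of_coe_mul_eq_mul_coe (mul_self_ne_zero.mpr (hpos _).ne').symm
      (by simpa using hcomm)
  · omega

theorem rectDiag_eq_coe_re (h : IsAligned (rectDiagonal fun k => (w k : ℍ)) A)
    {k : Fin (min m n)} (hk : w k ≠ 0) : rectDiag A k = ((rectDiag A k).re : ℍ) := by
  have hstar := h.isHermitian_conjTranspose_mul.apply (k.castLE (min_le_right m n))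
    (k.castLE (min_le_right m n))
  rw [conjTranspose_rectDiagonal_mul_apply, star_coe, coe_mul_eq_smul, Quaternion.star_smul]
    at hstar
  exact star_eq_self.mp (smul_right_injective _ hk hstar)

theorem re_rectDiag_nonneg (h : IsAligned (rectDiagonal fun k => (w k : ℍ)) A)
    {k : Fin (min m n)} (hk : 0 < w k) : 0 ≤ (rectDiag A k).re := by
  have hentry := re_apply_self_nonneg_of_isMaxOn_reTrace_mul h.isMaxOn_reTrace_mul
    (k.castLE (min_le_right m n))
  rw [conjTranspose_rectDiagonal_mul_apply, star_coe, coe_mul_eq_smul, re_smul, smul_eq_mul]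
    at hentry
  exact nonneg_of_mul_nonneg_right hentry hk

theorem monovary_re_rectDiag (h : IsAligned (rectDiagonal fun k => (w k : ℍ)) A) :
    Monovary (fun k => (rectDiag A k).re) w := by
  refine monovary_of_forall_sum_mul_comp_perm_le fun e => ?_
  have hle := h.reTrace_submatrix_le (e.viaEmbedding (Fin.castLEEmb (min_le_left m n)))
    (e.viaEmbedding (Fin.castLEEmb (min_le_right m n)))
  simpa only [reTrace_conjTranspose_rectDiagonal_mul, rectDiag_submatrix_viaEmbedding, star_coe,
    coe_mul_eq_smul, re_smul, smul_eq_mul, Function.comp_apply] using hle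

end IsAligned

theorem quaternion_svd_exists (m n : ℕ) (Q : Matrix (Fin m) (Fin n) (Quaternion ℝ)) :
    ∃ (U : Matrix (Fin m) (Fin m) (Quaternion ℝ)) (V : Matrix (Fin n) (Fin n) (Quaternion ℝ))
      (σ : Fin (min m n) → ℝ),
      Uᴴ * U = 1 ∧ Vᴴ * V = 1 ∧
      (∀ i j : Fin (min m n), i ≤ j → σ j ≤ σ i) ∧
      (∀ i, 0 ≤ σ i) ∧
      Q = U * (Matrix.of fun (i : Fin m) (j : Fin n) =>
          if h : (i : ℕ) = (j : ℕ) then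
            ((σ ⟨(i : ℕ), lt_min_iff.mpr ⟨i.isLt, h ▸ j.isLt⟩⟩ : ℝ) : Quaternion ℝ)
          else 0) * Vᴴ := by
  let w : Fin (min m n) → ℝ := fun k => ((k : ℝ) + 1)⁻¹
  have hpos : ∀ k, 0 < w k := fun k => by positivity
  have hw : StrictAnti w := fun i j hij => by
    have : (i : ℝ) < j := by exact_mod_cast hij
    exact inv_strictAnti₀ (by positivity) (by linarith)
  obtain ⟨U, hU, V, hV, h⟩ := exists_isAligned (rectDiagonal fun k => (w k : ℍ)) Q
  have hdiag : Uᴴ * Q * V = rectDiagonal fun k => ((rectDiag (Uᴴ * Q * V) k).re : ℍ) := by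
    rw [← funext fun k => h.rectDiag_eq_coe_re (hpos k).ne']
    exact eq_rectDiagonal_rectDiag fun i j => h.apply_eq_zero hpos hw.injective
  have hQ : Q = U * (Uᴴ * Q * V) * Vᴴ := by
    calc Q = (U * Uᴴ) * Q * (V * Vᴴ) := by
          rw [← star_eq_conjTranspose, ← star_eq_conjTranspose, Unitary.mul_star_self_of_mem hU,
            Unitary.mul_star_self_of_mem hV, Matrix.one_mul, Matrix.mul_one]
      _ = U * (Uᴴ * Q * V) * Vᴴ := by simp only [Matrix.mul_assoc]
  exact ⟨U, V, fun k => (rectDiag (Uᴴ * Q * V) k).re, hU.1, hV.1,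
    antitone_iff_forall_lt.mpr fun _ _ hij => h.monovary_re_rectDiag (hw hij),
    fun k => h.re_rectDiag_nonneg (hpos k), hQ.trans (congrArg (U * · * Vᴴ) hdiag)⟩
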